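/- Let m : [−1,1] → ℝ^{N+1} be continuous, α ∈ ℝ^{N+1}, and set f(v) = exp(α·m(v)). Let g : [−1,1] → ℝ be measurable with g ≥ 0 almost everywhere, such that g and g·log g are Lebesgue integrable on [−1,1] (with the convention 0·log 0 = 0). If ∫_{−1}^{1} m_i(v) g(v) dv = ∫_{−1}^{1} m_i(v) f(v) dv for every i = 0, …, N, then ∫_{−1}^{1} (g(v) log g(v) − g(v)) dv ≥ ∫_{−1}^{1} (f(v) log f(v) − f(v)) dv. That is, among all nonnegative densities with the same moments, the exponential-family density f = η_*'(α·m) = exp(α·m) minimizes the Maxwell–Boltzmann entropy functional ⟨η(g)⟩. -/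

import Mathlib

open MeasureTheory

/-- The Fenchel–Young inequality for the Maxwell–Boltzmann entropy density and its conjugate
`Real.exp`. -/
lemma mul_sub_exp_le_mul_log_sub {z : ℝ} (hz : 0 ≤ z) (y : ℝ) :
    y * z - Real.exp y ≤ z * Real.log z - z := by
  rcases hz.eq_or_lt with rfl | hz
  · simpa using (Real.exp_pos y).le
  · have h := mul_le_mul_of_nonneg_left (Real.add_one_le_exp (y - Real.log z)) hz.le
    rw [Real.exp_sub, Real.exp_log hz, mul_div_cancel₀ _ hz.ne'] at h
    linarith

/-- Integrating a linear combination of continuous functions against an integrable density gives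
the same linear combination of the moments. -/
lemma setIntegral_sum_mul_mul {ι : Type*} [Fintype ι] {K : Set ℝ} (hK : IsCompact K)
    {m : ℝ → ι → ℝ} (hm : ∀ i, ContinuousOn (fun v => m v i) K) (α : ι → ℝ)
    {h : ℝ → ℝ} (hh : IntegrableOn h K) :
    ∫ v in K, (∑ i, α i * m v i) * h v = ∑ i, α i * ∫ v in K, m v i * h v := by
  simp_rw [Finset.sum_mul, mul_assoc]
  rw [integral_finsetSum _ fun i _ => (hh.continuousOn_mul (hm i) hK).const_mul (α i)]
  simp_rw [integral_const_mul]

/-- Minimality of the exponential-family ansatz for the Maxwell–Boltzmann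
entropy closure: if a nonnegative density `g` on `[-1,1]` has the same moments
(with respect to a continuous basis `m`) as `f = exp(α·m)`, then the entropy
`⟨g log g − g⟩` of `g` is at least the entropy of `f`. -/
theorem exp_family_minimizes_entropy (N : ℕ) (m : ℝ → Fin (N + 1) → ℝ)
    (hm : ∀ i, ContinuousOn (fun v => m v i) (Set.Icc (-1 : ℝ) 1))
    (α : Fin (N + 1) → ℝ) (f : ℝ → ℝ)
    (hf : f = fun v => Real.exp (∑ i, α i * m v i))
    (g : ℝ → ℝ) (hg_meas : Measurable g)
    (hg_nonneg : ∀ᵐ v ∂(volume.restrict (Set.Icc (-1 : ℝ) 1)), 0 ≤ g v)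
    (hg_int : IntegrableOn g (Set.Icc (-1 : ℝ) 1))
    (hglogg_int : IntegrableOn (fun v => g v * Real.log (g v)) (Set.Icc (-1 : ℝ) 1))
    (hmom : ∀ i, ∫ v in Set.Icc (-1 : ℝ) 1, m v i * g v
      = ∫ v in Set.Icc (-1 : ℝ) 1, m v i * f v) :
    ∫ v in Set.Icc (-1 : ℝ) 1, (g v * Real.log (g v) - g v)
      ≥ ∫ v in Set.Icc (-1 : ℝ) 1, (f v * Real.log (f v) - f v) := by
  have hK : IsCompact (Set.Icc (-1 : ℝ) 1) := isCompact_Icc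
  have hL : ContinuousOn (fun v => ∑ i, α i * m v i) (Set.Icc (-1 : ℝ) 1) :=
    continuousOn_finsetSum _ fun i _ => continuousOn_const.mul (hm i)
  have hf_int : IntegrableOn f (Set.Icc (-1 : ℝ) 1) := by
    rw [hf]
    exact hL.rexp.integrableOn_compact hK
  have hLg_int := hg_int.continuousOn_mul hL hK
  have hLf_int := hf_int.continuousOn_mul hL hK
  have hlog (v : ℝ) : f v * Real.log (f v) = (∑ i, α i * m v i) * f v := by
    simp only [hf, Real.log_exp, mul_comm]
  have hmoments : ∫ v in Set.Icc (-1 : ℝ) 1, (∑ i, α i * m v i) * f v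
      = ∫ v in Set.Icc (-1 : ℝ) 1, (∑ i, α i * m v i) * g v := by
    simp_rw [setIntegral_sum_mul_mul hK hm α hf_int, setIntegral_sum_mul_mul hK hm α hg_int, hmom]
  calc ∫ v in Set.Icc (-1 : ℝ) 1, (f v * Real.log (f v) - f v)
      = ∫ v in Set.Icc (-1 : ℝ) 1, ((∑ i, α i * m v i) * g v - f v) := by
        simp_rw [hlog]
        rw [integral_sub hLf_int hf_int, integral_sub hLg_int hf_int, hmoments]
    _ ≤ ∫ v in Set.Icc (-1 : ℝ) 1, (g v * Real.log (g v) - g v) := by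
        refine integral_mono_ae (hLg_int.sub hf_int) (hglogg_int.sub hg_int) ?_
        filter_upwards [hg_nonneg] with v hv
        simpa only [hf] using mul_sub_exp_le_mul_log_sub hv _
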